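/- Let 𝒯 be a T-mesh of Ω with d ≥ 2, let i ∈ {1,…,d}, and let x, y ∈ cl(Ω) be points with x_i = y_i, x ∈ Sk_i and y ∉ Sk_i. Then there exists a T-junction T with odir(T) = i, with pointing direction k = pdir(T) and associated cell Q = ascell(T), such that cl(T) ∩ conv{x, y} ≠ ∅, x_k ≠ y_k, and Q_k ∩ conv{x_k, y_k} ≠ ∅. In particular T_i = {x_i} = {y_i}. -/

import Mathlib

open Set

namespace TSpline

/-- A box in `ℝ^d`, given componentwise. -/
abbrev Box (d : ℕ) := Fin d → Set ℝ

/-- The subset of `ℝ^d` determined by a box. -/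
def toSet {d : ℕ} (E : Box d) : Set (Fin d → ℝ) := Set.pi Set.univ E

/-- The closed index domain `cl Ω = ∏ₖ [0, Nₖ]`. -/
def domain {d : ℕ} (N : Fin d → ℕ) : Set (Fin d → ℝ) :=
  Set.pi Set.univ (fun k => Set.Icc (0 : ℝ) (N k))

/-- The boundary `∂Ω` of the index domain. -/
def bdryDomain {d : ℕ} (N : Fin d → ℕ) : Set (Fin d → ℝ) := frontier (domain N)

/-- A component which is an integer singleton `{n}`, `0 ≤ n ≤ Nₖ`. -/
def IsSingletonComp (Nk : ℕ) (S : Set ℝ) : Prop :=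
  ∃ n : ℕ, n ≤ Nk ∧ S = {(n : ℝ)}

/-- A component which is an open interval with integer endpoints in `[0, Nₖ]`. -/
def IsIntervalComp (Nk : ℕ) (S : Set ℝ) : Prop :=
  ∃ a b : ℕ, a < b ∧ b ≤ Nk ∧ S = Set.Ioo (a : ℝ) (b : ℝ)

/-- A mesh entity: every component is an integer singleton or an open integer interval. -/
def IsMeshEntity {d : ℕ} (N : Fin d → ℕ) (E : Box d) : Prop :=
  ∀ k, IsSingletonComp (N k) (E k) ∨ IsIntervalComp (N k) (E k)

/-- The directions in which an entity has a singleton component. -/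
def singDirs {d : ℕ} (E : Box d) : Set (Fin d) := {i | ∃ r : ℝ, E i = {r}}

/-- Split all entities of `M` contained in the region `D` whose `j`-th component is `Q j`
into the three children obtained by bisecting the `j`-th component at `m`. -/
def midSplit {d : ℕ} (M : Set (Box d)) (Q : Box d) (j : Fin d) (m : ℝ) (D : Box d) :
    Set (Box d) :=
  (M \ {E | E ∈ M ∧ (∀ k, E k ⊆ D k) ∧ E j = Q j}) ∪
  ⋃ E ∈ {E | E ∈ M ∧ (∀ k, E k ⊆ D k) ∧ E j = Q j},
    ({Function.update E j (Set.Ioo (sInf (Q j)) m),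
      Function.update E j {m},
      Function.update E j (Set.Ioo m (sSup (Q j)))} : Set (Box d))

/-- One symmetric bisection of a `d`-dimensional cell with integer midpoint. -/
def BisectStep {d : ℕ} (N : Fin d → ℕ) (M M' : Set (Box d)) : Prop :=
  ∃ Q ∈ M, ∃ j : Fin d, ∃ a b mid : ℕ,
    (∀ k, IsIntervalComp (N k) (Q k)) ∧
    Q j = Set.Ioo (a : ℝ) (b : ℝ) ∧ a + b = 2 * mid ∧
    M' = midSplit M Q j (mid : ℝ) (fun k => closure (Q k))

/-- A tensor-product mesh with integer breakpoints. -/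
def IsTensorMesh {d : ℕ} (N : Fin d → ℕ) (M : Set (Box d)) : Prop :=
  ∃ G : Fin d → Finset ℕ,
    (∀ k, 0 ∈ G k ∧ N k ∈ G k ∧ ∀ n ∈ G k, n ≤ N k) ∧
    M = {E | ∀ k, (∃ n ∈ G k, E k = {(n : ℝ)}) ∨
          (∃ a ∈ G k, ∃ b ∈ G k, a < b ∧ (∀ c ∈ G k, c ≤ a ∨ b ≤ c) ∧
            E k = Set.Ioo (a : ℝ) (b : ℝ))}

/-- A T-mesh of the index domain: a finite disjoint partition of `cl Ω` into mesh
entities, obtained from a tensor-product mesh by repeated symmetric bisections. -/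
structure TMesh (d : ℕ) (N : Fin d → ℕ) where
  entities : Set (Box d)
  finite : entities.Finite
  mem_entity : ∀ E ∈ entities, IsMeshEntity N E
  union_eq : (⋃ E ∈ entities, toSet E) = domain N
  pairwise_disjoint : ∀ E ∈ entities, ∀ F ∈ entities, E ≠ F → toSet E ∩ toSet F = ∅
  constructed : ∃ M₀ : Set (Box d), IsTensorMesh N M₀ ∧
    Relation.ReflTransGen (BisectStep N) M₀ entities

variable {d : ℕ} {N : Fin d → ℕ}

/-- `H^k`: the entities with exactly `d - k` singleton components. -/
def Hdim (T : TMesh d N) (k : ℕ) : Set (Box d) :=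
  {E ∈ T.entities | (singDirs E).ncard = d - k}

/-- The `j`-orthogonal skeleton `Sk_j`. -/
def skel (T : TMesh d N) (j : Fin d) : Set (Fin d → ℝ) :=
  ⋃ F ∈ {F ∈ Hdim T (d - 1) | ∃ r : ℝ, F j = {r}}, closure (toSet F)

/-- The valence of a `(d-2)`-dimensional entity: the number of hyperfaces in whose
boundary it lies. -/
noncomputable def valence (T : TMesh d N) (J : Box d) : ℕ :=
  {F ∈ Hdim T (d - 1) | toSet J ⊆ frontier (toSet F)}.ncard

/-- A T-junction (hanging interface). -/
def IsTJunction (T : TMesh d N) (J : Box d) : Prop :=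
  J ∈ Hdim T (d - 2) ∧ ¬ toSet J ⊆ bdryDomain N ∧ valence T J < 4

/-- `TJData T J Q i j`: `Q` is an associated cell of the T-junction `J`, with orthogonal
direction `i` and pointing direction `j`. -/
def TJData (T : TMesh d N) (J Q : Box d) (i j : Fin d) : Prop :=
  Q ∈ Hdim T d ∧ toSet J ⊆ frontier (toSet Q) ∧
  closure (toSet J) ∩ Set.pi Set.univ (fun k => frontier (Q k)) = ∅ ∧
  i ≠ j ∧ (∃ r : ℝ, J i = {r}) ∧ (∃ r : ℝ, J j = {r}) ∧
  J i ⊆ Q i ∧ J i ≠ Q i ∧ J j ⊆ frontier (Q j)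

/-- `⌊(p_k + 1)/2⌋`. -/
def halfdeg (p : Fin d → ℕ) (k : Fin d) : ℕ := (p k + 1) / 2

/-- The active region `AR_p`. -/
def activeRegion (N p : Fin d → ℕ) : Set (Fin d → ℝ) :=
  Set.pi Set.univ (fun k => Set.Icc (halfdeg p k : ℝ) ((N k : ℝ) - (halfdeg p k : ℝ)))

/-- The slice `S_k(n)`. -/
def slice (N : Fin d → ℕ) (k : Fin d) (n : ℕ) : Set (Fin d → ℝ) :=
  {x ∈ domain N | x k = (n : ℝ)}

/-- The `k`-th frame region `FR^(k)`. -/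
def frameRegion (N p : Fin d → ℕ) (k : Fin d) : Set (Fin d → ℝ) :=
  {x ∈ domain N | x k ∈ Set.Icc (0 : ℝ) (halfdeg p k : ℝ) ∪
      Set.Icc ((N k : ℝ) - (halfdeg p k : ℝ)) (N k : ℝ)}

/-- Admissibility of a T-mesh. -/
def Admissible (p : Fin d → ℕ) (T : TMesh d N) : Prop :=
  (∀ k : Fin d, ∀ J Q : Box d, ∀ i j : Fin d, IsTJunction T J → TJData T J Q i j →
      (i = k ∨ j = k) → ¬ toSet J ⊆ frameRegion N p k) ∧
  (∀ k : Fin d, ∀ n : ℕ, (n ≤ halfdeg p k ∨ (N k - halfdeg p k ≤ n ∧ n ≤ N k)) →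
      slice N k n ⊆ skel T k)

/-- Anchors of degree `p`. -/
def IsAnchor (p : Fin d → ℕ) (T : TMesh d N) (A : Box d) : Prop :=
  A ∈ T.entities ∧ toSet A ⊆ activeRegion N p ∧
  ∀ j : Fin d, (∃ r : ℝ, A j = {r}) ↔ Odd (p j)

/-- `P_{j,n}(E)`: replace the `j`-th component of `E` by `{n}`. -/
def proj {d : ℕ} (E : Box d) (j : Fin d) (n : ℕ) : Box d :=
  Function.update E j {(n : ℝ)}

/-- The global knot vector `gv_j(E)` (as a set of integer indices). -/
def gv (T : TMesh d N) (j : Fin d) (E : Box d) : Set ℕ :=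
  {n | n ≤ N j ∧ toSet (proj E j n) ⊆ skel T j}

/-- `V` is a block of consecutive entries of `G`. -/
def IsBlockOf (V G : Set ℕ) : Prop :=
  V ⊆ G ∧ V.Finite ∧ ∀ g ∈ G, ∀ a ∈ V, ∀ b ∈ V, a ≤ g → g ≤ b → g ∈ V

/-- Two knot vectors overlap (`⋈`): both occur as blocks of consecutive entries of a
common knot vector. -/
def Overlaps (V₁ V₂ : Set ℕ) : Prop :=
  ∃ W : Set ℕ, W.Finite ∧ IsBlockOf V₁ W ∧ IsBlockOf V₂ W

/-- The convex hull in `ℝ` of a set of integer indices. -/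
def convOf (V : Set ℕ) : Set ℝ := convexHull ℝ ((fun n : ℕ => (n : ℝ)) '' V)

/-- The local knot vector of an anchor `A` in direction `j`: the block of `p_j + 2`
consecutive entries of `gv_j(A)` whose entry of rank `⌊(p_j+1)/2⌋` is `inf A_j`. -/
def IsAnchorKV (T : TMesh d N) (p : Fin d → ℕ) (A : Box d) (j : Fin d) (V : Set ℕ) : Prop :=
  IsBlockOf V (gv T j A) ∧ V.ncard = p j + 2 ∧
  ∃ a : ℕ, (a : ℝ) = sInf (A j) ∧ a ∈ V ∧ {v ∈ V | v < a}.ncard = halfdeg p j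

open Classical in
noncomputable def anchorKV (T : TMesh d N) (p : Fin d → ℕ) (A : Box d) (j : Fin d) :
    Set ℕ :=
  if h : ∃ V, IsAnchorKV T p A j V then h.choose else ∅

/-- The index support of an anchor. -/
noncomputable def suppA (T : TMesh d N) (p : Fin d → ℕ) (A : Box d) : Set (Fin d → ℝ) :=
  Set.pi Set.univ (fun k => convOf (anchorKV T p A k))

/-- The local knot vector of a T-junction `J` (with associated cell `Q`, orthogonal
direction `i`, pointing direction `j`) in direction `k`. -/
def IsTJKV (T : TMesh d N) (p : Fin d → ℕ) (J Q : Box d) (i j k : Fin d) (V : Set ℕ) :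
    Prop :=
  if k = i then ∃ t : ℕ, J i = {(t : ℝ)} ∧ V = {t}
  else if k = j then
    IsBlockOf V (gv T j J) ∧ V.ncard = p j + 1 ∧
    ((Even (p j) ∧ ∃ t : ℕ, J j = {(t : ℝ)} ∧ t ∈ V ∧ {v ∈ V | v < t}.ncard = p j / 2) ∨
     (Odd (p j) ∧ ∃ a b : ℕ, (a : ℝ) = sInf (Q j) ∧ (b : ℝ) = sSup (Q j) ∧ a ∈ V ∧ b ∈ V ∧
        {v ∈ V | v < a}.ncard = p j / 2 ∧ {v ∈ V | v < b}.ncard = p j / 2 + 1))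
  else
    IsBlockOf V (gv T k J) ∧ V.ncard = p k + 2 + p k % 2 ∧
    ∃ a b : ℕ, a ∈ V ∧ b ∈ V ∧ J k = Set.Ioo (a : ℝ) (b : ℝ) ∧
      {v ∈ V | v < a}.ncard = (p k + 1) / 2 ∧ {v ∈ V | v < b}.ncard = (p k + 1) / 2 + 1

/-- Local knot vector of a T-junction, quantifying over the (unique) associated data. -/
def IsTJKVFull (T : TMesh d N) (p : Fin d → ℕ) (J : Box d) (k : Fin d) (V : Set ℕ) :
    Prop :=
  ∃ Q : Box d, ∃ i j : Fin d, TJData T J Q i j ∧ IsTJKV T p J Q i j k V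

open Classical in
noncomputable def tjKV (T : TMesh d N) (p : Fin d → ℕ) (J : Box d) (k : Fin d) : Set ℕ :=
  if h : ∃ V, IsTJKVFull T p J k V then h.choose else ∅

/-- The geometric T-junction extension `GTJ(J)`. -/
noncomputable def GTJ (T : TMesh d N) (p : Fin d → ℕ) (J : Box d) : Set (Fin d → ℝ) :=
  Set.pi Set.univ (fun k => convOf (tjKV T p J k))

/-- `J` is a T-junction with orthogonal direction `i` and pointing direction `j`. -/
def HasDirs (T : TMesh d N) (J : Box d) (i j : Fin d) : Prop :=
  IsTJunction T J ∧ ∃ Q : Box d, TJData T J Q i j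

/-- Strong geometric analysis-suitability. -/
def SGAS (T : TMesh d N) (p : Fin d → ℕ) : Prop :=
  ∀ J₁ J₂ : Box d, ∀ i₁ j₁ i₂ j₂ : Fin d,
    HasDirs T J₁ i₁ j₁ → HasDirs T J₂ i₂ j₂ → i₁ ≠ i₂ →
    GTJ T p J₁ ∩ GTJ T p J₂ = ∅

/-- Weak geometric analysis-suitability. -/
def WGAS (T : TMesh d N) (p : Fin d → ℕ) : Prop :=
  ∀ J₁ J₂ : Box d, ∀ i₁ j₁ i₂ j₂ : Fin d,
    HasDirs T J₁ i₁ j₁ → HasDirs T J₂ i₂ j₂ → i₁ ≠ i₂ → j₁ ≠ j₂ →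
    GTJ T p J₁ ∩ GTJ T p J₂ = ∅

/-- The abstract T-junction extension `ATJ_j(n)`. -/
noncomputable def ATJ (T : TMesh d N) (p : Fin d → ℕ) (j : Fin d) (n : ℕ) :
    Set (Fin d → ℝ) :=
  slice N j n ∩
  (⋃ A ∈ {A : Box d | IsAnchor p T A ∧ n ∈ gv T j A}, suppA T p A) ∩
  (⋃ A ∈ {A : Box d | IsAnchor p T A ∧ n ∉ gv T j A}, suppA T p A)

/-- `ATJ_j = ⋃ₙ ATJ_j(n)`. -/
noncomputable def ATJfull (T : TMesh d N) (p : Fin d → ℕ) (j : Fin d) :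
    Set (Fin d → ℝ) :=
  ⋃ n ∈ Set.Iic (N j), ATJ T p j n

/-- Abstract analysis-suitability. -/
def AAS (T : TMesh d N) (p : Fin d → ℕ) : Prop :=
  ∀ i j : Fin d, i ≠ j → ∀ n m : ℕ, n ≤ N i → m ≤ N j →
    ATJ T p i n ∩ ATJ T p j m = ∅

/-- Two anchors weakly partially overlap. -/
def WeakPartOverlap (T : TMesh d N) (p : Fin d → ℕ) (A₁ A₂ : Box d) : Prop :=
  ∃ ℓ : Fin d, anchorKV T p A₁ ℓ ≠ anchorKV T p A₂ ℓ ∧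
    Overlaps (anchorKV T p A₁ ℓ) (anchorKV T p A₂ ℓ)

/-- Two anchors strongly partially overlap. -/
def StrongPartOverlap (T : TMesh d N) (p : Fin d → ℕ) (A₁ A₂ : Box d) : Prop :=
  suppA T p A₁ ∩ suppA T p A₂ = ∅ ∨
  d - 1 ≤ {k : Fin d | Overlaps (anchorKV T p A₁ k) (anchorKV T p A₂ k)}.ncard

/-- Weak dual-compatibility. -/
def WDC (T : TMesh d N) (p : Fin d → ℕ) : Prop :=
  ∀ A₁ A₂ : Box d, IsAnchor p T A₁ → IsAnchor p T A₂ → A₁ ≠ A₂ →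
    WeakPartOverlap T p A₁ A₂

/-- Strong dual-compatibility. -/
def SDC (T : TMesh d N) (p : Fin d → ℕ) : Prop :=
  ∀ A₁ A₂ : Box d, IsAnchor p T A₁ → IsAnchor p T A₂ → A₁ ≠ A₂ →
    StrongPartOverlap T p A₁ A₂

/-- `Q'` is a neighboring cell of `Q` in direction `ℓ`. -/
def NeighborInDir (T : TMesh d N) (Q Q' : Box d) (ℓ : Fin d) : Prop :=
  Q' ∈ Hdim T d ∧ Q' ≠ Q ∧
  (sSup (Q ℓ) = sInf (Q' ℓ) ∨ sSup (Q' ℓ) = sInf (Q ℓ)) ∧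
  ∀ k : Fin d, k ≠ ℓ → (Q k ∩ Q' k).Nonempty

/-- Assumption A: every cell has neighbor cells in the active region in at least three
pairwise distinct directions. -/
def AssumptionA (T : TMesh d N) (p : Fin d → ℕ) : Prop :=
  ∀ Q ∈ Hdim T d, ∃ l₁ l₂ l₃ : Fin d, l₁ ≠ l₂ ∧ l₁ ≠ l₃ ∧ l₂ ≠ l₃ ∧
    ∀ l ∈ ({l₁, l₂, l₃} : Set (Fin d)),
      ∃ Q' : Box d, NeighborInDir T Q Q' l ∧ toSet Q' ⊆ activeRegion N p

/-- The extended region `D` of Algorithm `subdiv`. -/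
def extendD (N p : Fin d → ℕ) (Q : Box d) (j : Fin d) : Box d := fun ℓ =>
  closure (Q ℓ) ∪
  {x : ℝ | ℓ ≠ j ∧ sInf (Q ℓ) = (halfdeg p ℓ : ℝ) ∧
      x ∈ Set.Icc (0 : ℝ) (halfdeg p ℓ : ℝ)} ∪
  {x : ℝ | ℓ ≠ j ∧ sSup (Q ℓ) = (N ℓ : ℝ) - (halfdeg p ℓ : ℝ) ∧
      x ∈ Set.Icc ((N ℓ : ℝ) - (halfdeg p ℓ : ℝ)) (N ℓ : ℝ)}

/-- The entity set produced by Algorithm `subdiv(𝒯, Q, j)`. -/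
def subdivEntities (N p : Fin d → ℕ) (M : Set (Box d)) (Q : Box d) (j : Fin d) :
    Set (Box d) :=
  midSplit M Q j ((sInf (Q j) + sSup (Q j)) / 2) (extendD N p Q j)

open Classical in
/-- The componentwise minimal bounding box `M(E,F)`. -/
noncomputable def MBox {d : ℕ} (E F : Box d) : Box d := fun ℓ =>
  if (E ℓ ∩ F ℓ).Nonempty then E ℓ ∩ F ℓ
  else if sSup (E ℓ) ≤ sInf (F ℓ) then Set.Icc (sSup (E ℓ)) (sInf (F ℓ))
  else Set.Icc (sSup (F ℓ)) (sInf (E ℓ))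

/-- `V` is the local knot vector of `E` (an anchor or a T-junction) in direction `j`. -/
def IsLocalKVOf (T : TMesh d N) (p : Fin d → ℕ) (E : Box d) (j : Fin d) (V : Set ℕ) :
    Prop :=
  (IsAnchor p T E ∧ IsAnchorKV T p E j V) ∨
  (IsTJunction T E ∧ IsTJKVFull T p E j V)

end TSpline

/-!
Let `z` be the last point of the segment from `x` to `y` on `Sk_i`. A neighbourhood of `z` in the
slice of constant `i`-th coordinate is tiled by unit faces, each lying in a single mesh entity,
which is either a cell or an `i`-orthogonal hyperface. The face entered right after `z` lies in a
cell, whereas a hyperface whose closure contains `z` covers some other face at `z`. Moving from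
the former to the latter one coordinate at a time, and only in directions `k` with `x k ≠ y k`,
one crosses at some moment from a cell `Q` into an `i`-orthogonal hyperface `P`. The entity `J`
between the two lies in `cl P` and `cl Q`, because symmetric bisections produce dyadic intervals
and therefore an entity meeting the closure of another one is contained in it. Finally `J` is a
T-junction: a hyperface with `J` in its boundary occupies one of the four positions
`q ± e_i / 2`, `q ± e_k / 2` around a point `q` of `J`, and `Q` already takes one of them.
-/

namespace TSpline

/-! ### Dyadic intervals -/

section Dyadic

variable {G : Finset ℕ} {a b c e m : ℕ}

/-- The integer intervals `(a, b)` obtained from the gaps between consecutive elements of `G`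
by repeated symmetric bisection: the possible interval components of a T-mesh in a direction in
which the initial tensor-product mesh has the breakpoints `G`. -/
inductive Dyadic (G : Finset ℕ) : ℕ → ℕ → Prop
  | gap {a b : ℕ} (ha : a ∈ G) (hb : b ∈ G) (hab : a < b) (h : ∀ c ∈ G, c ≤ a ∨ b ≤ c) :
      Dyadic G a b
  | half {a b c e m : ℕ} (h : Dyadic G a b) (hm : a + b = 2 * m)
      (hce : c = a ∧ e = m ∨ c = m ∧ e = b) : Dyadic G c e

theorem Dyadic.lt (h : Dyadic G a b) : a < b := by
  induction h with
  | gap _ _ hab _ => exact hab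
  | half _ _ _ _ => omega

/-- The nesting relation of dyadic intervals: `(a, b)` is equal to `(c, e)` or contained in one of
its halves. -/
def EqOrInHalf (a b c e : ℕ) : Prop :=
  a = c ∧ b = e ∨ c ≤ a ∧ b ≤ e ∧ (2 * b ≤ c + e ∨ c + e ≤ 2 * a)

theorem Dyadic.disjoint_or_eqOrInHalf_gap (ha : a ∈ G) (hb : b ∈ G)
    (hgap : ∀ c ∈ G, c ≤ a ∨ b ≤ c) (h : Dyadic G c e) :
    (b ≤ c ∨ e ≤ a) ∨ EqOrInHalf c e a b := by
  unfold EqOrInHalf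
  induction h with
  | gap hc he _ hgap' =>
    have := hgap _ hc
    have := hgap _ he
    have := hgap' _ ha
    have := hgap' _ hb
    omega
  | half h _ _ _ => have := h.lt; omega

theorem Dyadic.disjoint_or_eqOrInHalf (h : Dyadic G a b) (h' : Dyadic G c e) :
    (b ≤ c ∨ e ≤ a) ∨ EqOrInHalf a b c e ∨ EqOrInHalf c e a b := by
  induction h generalizing c e with
  | gap ha hb _ hgap => exact (h'.disjoint_or_eqOrInHalf_gap ha hb hgap).imp_right Or.inr
  | half h hm hhalf ih =>
    induction h' with
    | gap hc he _ hgap =>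
      exact ((h.half hm hhalf).disjoint_or_eqOrInHalf_gap hc he hgap).imp Or.symm Or.inl
    | half h' hm' hhalf' ih' =>
      have hchild := ih (h'.half hm' hhalf')
      have hparent := ih'
      have hlt := h.lt
      unfold EqOrInHalf at hchild hparent ⊢
      rcases hhalf with ⟨rfl, rfl⟩ | ⟨rfl, rfl⟩ <;>
        rcases hhalf' with ⟨rfl, rfl⟩ | ⟨rfl, rfl⟩ <;> omega

theorem Dyadic.le_midpoint_or_midpoint_le (h : Dyadic G c e) (h' : Dyadic G a b)
    (hm : a + b = 2 * m) (hac : a ≤ c) (heb : e ≤ b) (hne : ¬ (c = a ∧ e = b)) :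
    e ≤ m ∨ m ≤ c := by
  have hrel := h.disjoint_or_eqOrInHalf h'
  have hlt := h.lt
  unfold EqOrInHalf at hrel
  omega

end Dyadic

section Intervals

variable {α : Type*} [LinearOrder α] [DenselyOrdered α]

theorem Ioo_subset_Icc_iff [TopologicalSpace α] [OrderTopology α] {a b c e : α} (hce : c < e) :
    Ioo c e ⊆ Icc a b ↔ a ≤ c ∧ e ≤ b := by
  rw [← Icc_subset_Icc_iff hce.le, ← closure_Ioo hce.ne, isClosed_Icc.closure_subset_iff]

theorem Ioo_inj {a b c e : α} (hab : a < b) : Ioo a b = Ioo c e ↔ a = c ∧ b = e := by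
  refine ⟨fun h => ?_, by rintro ⟨rfl, rfl⟩; rfl⟩
  have hce : c < e := nonempty_Ioo.1 (h ▸ nonempty_Ioo.2 hab)
  have h₁ := (Ioo_subset_Ioo_iff hab).1 h.subset
  have h₂ := (Ioo_subset_Ioo_iff hce).1 h.superset
  exact ⟨h₂.1.antisymm h₁.1, h₁.2.antisymm h₂.2⟩

theorem Ioo_ne_singleton {a b : α} (hab : a < b) (r : α) : Ioo a b ≠ {r} := fun h =>
  Ioo_infinite hab (h ▸ finite_singleton r)

end Intervals

/-! ### The frontier condition -/

section FrontierCondition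

variable {d : ℕ} {N : Fin d → ℕ} {M M' : Set (Box d)}

/-- Every interval component of an entity of `M` is dyadic for the breakpoints `G`. -/
def HasDyadicComponents (G : Fin d → Finset ℕ) (M : Set (Box d)) : Prop :=
  ∀ E ∈ M, ∀ k, (∃ n : ℕ, E k = {(n : ℝ)}) ∨ ∃ a b : ℕ, Dyadic (G k) a b ∧ E k = Ioo (a : ℝ) b

/-- An entity that meets the closure of another one is contained in that closure. Entities being
boxes, both conditions are expressed componentwise. -/
def FrontierCondition (M : Set (Box d)) : Prop :=
  ∀ E ∈ M, ∀ F ∈ M, (∀ k, (E k ∩ closure (F k)).Nonempty) → ∀ k, E k ⊆ closure (F k)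

theorem IsTensorMesh.exists_hasDyadicComponents (h : IsTensorMesh N M) :
    ∃ G, HasDyadicComponents G M := by
  obtain ⟨G, -, rfl⟩ := h
  refine ⟨G, fun E hE k => ?_⟩
  rcases hE k with ⟨n, -, hn⟩ | ⟨a, ha, b, hb, hab, hgap, hE⟩
  · exact Or.inl ⟨n, hn⟩
  · exact Or.inr ⟨a, b, .gap ha hb hab hgap, hE⟩

theorem subset_closure_of_subsingleton {X : Type*} [TopologicalSpace X] {s t : Set X}
    (hs : s.Subsingleton) (hst : (s ∩ closure t).Nonempty) : s ⊆ closure t := by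
  obtain ⟨x, hxs, hxt⟩ := hst
  rw [hs.eq_singleton_of_mem hxs]
  exact singleton_subset_iff.2 hxt

theorem IsTensorMesh.frontierCondition (h : IsTensorMesh N M) : FrontierCondition M := by
  obtain ⟨G, -, rfl⟩ := h
  intro E hE F hF hEF k
  have hmeet := hEF k
  rcases hE k with ⟨n, -, hn⟩ | ⟨a, -, b, -, hab, hgap, hEk⟩
  · exact subset_closure_of_subsingleton (hn ▸ subsingleton_singleton) hmeet
  obtain ⟨t, htE, htF⟩ := hmeet
  rw [hEk] at htE ⊢
  rcases hF k with ⟨n, hnG, hn⟩ | ⟨c, hc, e, he, hce, -, hFk⟩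
  · rw [hn, closure_singleton, mem_singleton_iff] at htF
    subst htF
    have := hgap n hnG
    have han : a < n := Nat.cast_lt.1 htE.1
    have hnb : n < b := Nat.cast_lt.1 htE.2
    omega
  · rw [hFk, closure_Ioo (Nat.cast_lt.2 hce).ne] at htF ⊢
    have hae : a < e := by exact_mod_cast htE.1.trans_le htF.2
    have hcb : c < b := by exact_mod_cast htF.1.trans_lt htE.2
    have hca : c ≤ a := by have := hgap c hc; omega
    have hbe : b ≤ e := by have := hgap e he; omega
    exact (Ioo_subset_Icc_iff (Nat.cast_lt.2 hab)).2
      ⟨Nat.cast_le.2 hca, Nat.cast_le.2 hbe⟩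

theorem HasDyadicComponents.dyadic {G : Fin d → Finset ℕ} (hM : HasDyadicComponents G M)
    {E : Box d} (hE : E ∈ M) {k : Fin d} {a b : ℕ} (hab : a < b) (hEk : E k = Ioo (a : ℝ) b) :
    Dyadic (G k) a b := by
  have habR : (a : ℝ) < b := Nat.cast_lt.2 hab
  rcases hM E hE k with ⟨n, hn⟩ | ⟨c, e, hce, h⟩
  · exact absurd (hEk.symm.trans hn) (Ioo_ne_singleton habR n)
  · obtain ⟨hac, hbe⟩ := (Ioo_inj habR).1 (hEk.symm.trans h)
    rwa [Nat.cast_inj.1 hac, Nat.cast_inj.1 hbe]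

/-- The three pieces of the interval `(a, b)` bisected at `m`. -/
def pieces (a m b : ℝ) : Set (Set ℝ) := {Ioo a m, {m}, Ioo m b}

section Pieces

variable {a m b : ℝ} {S P : Set ℝ}

theorem subset_Ioo_of_mem_pieces (ham : a < m) (hmb : m < b) (hP : P ∈ pieces a m b) :
    P ⊆ Ioo a b := by
  rcases hP with rfl | rfl | rfl
  · exact Ioo_subset_Ioo_right hmb.le
  · exact singleton_subset_iff.2 ⟨ham, hmb⟩
  · exact Ioo_subset_Ioo_left ham.le

theorem one_side_of_mem_pieces (hP : P ∈ pieces a m b) :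
    P ⊆ Iio m ∨ P.Subsingleton ∨ P ⊆ Ioi m := by
  rcases hP with rfl | rfl | rfl
  · exact Or.inl fun _ ht => ht.2
  · exact Or.inr (Or.inl subsingleton_singleton)
  · exact Or.inr (Or.inr fun _ ht => ht.1)

theorem subset_closure_of_mem_pieces (ham : a < m) (hmb : m < b) (hP : P ∈ pieces a m b)
    (hS : S ⊆ Icc a b) (hside : S ⊆ Iio m ∨ S.Subsingleton ∨ S ⊆ Ioi m)
    (hmeet : (S ∩ closure P).Nonempty) : S ⊆ closure P := by
  rcases hside with hlt | hsub | hgt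
  · obtain ⟨t, htS, htP⟩ := hmeet
    have htm : t < m := hlt htS
    rcases hP with rfl | rfl | rfl
    · rw [closure_Ioo ham.ne]
      exact fun u hu => ⟨(hS hu).1, (hlt hu).le⟩
    · rw [closure_singleton] at htP
      exact absurd htP htm.ne
    · rw [closure_Ioo hmb.ne] at htP
      exact absurd htP.1 htm.not_ge
  · exact subset_closure_of_subsingleton hsub hmeet
  · obtain ⟨t, htS, htP⟩ := hmeet
    have hmt : m < t := hgt htS
    rcases hP with rfl | rfl | rfl
    · rw [closure_Ioo ham.ne] at htP
      exact absurd htP.2 hmt.not_ge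
    · rw [closure_singleton] at htP
      exact absurd htP hmt.ne'
    · rw [closure_Ioo hmb.ne]
      exact fun u hu => ⟨(hgt hu).le, (hS hu).2⟩

theorem mem_midSplit (hab : a < b) {Q : Box d} {j : Fin d} (hQ : Q j = Ioo a b) {D E' : Box d} :
    E' ∈ midSplit M Q j m D ↔
      (E' ∈ M ∧ ¬ ((∀ k, E' k ⊆ D k) ∧ E' j = Q j)) ∨
        ∃ E ∈ M, ((∀ k, E k ⊆ D k) ∧ E j = Q j) ∧
          ∃ P ∈ pieces a m b, E' = Function.update E j P := by
  simp only [midSplit, pieces, hQ, csInf_Ioo hab, csSup_Ioo hab, mem_union, mem_sdiff, mem_iUnion,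
    mem_ofPred_eq, mem_insert_iff, mem_singleton_iff, exists_prop, exists_eq_or_imp,
    exists_eq_left]
  exact or_congr (by tauto) (by simp only [and_assoc])

theorem exists_parent_of_mem_midSplit (ham : a < m) (hmb : m < b) {Q : Box d} {j : Fin d}
    (hQ : Q j = Ioo a b) {D E' : Box d} (hE' : E' ∈ midSplit M Q j m D) :
    ∃ E ∈ M, (∀ k, E' k ⊆ E k) ∧ (∀ k ≠ j, E' k = E k) ∧
      (E' j = E j ∨ (∀ k, E k ⊆ D k) ∧ E' j ∈ pieces a m b) := by
  rcases (mem_midSplit (ham.trans hmb) hQ).1 hE' with ⟨hE', -⟩ | ⟨E, hE, ⟨hED, hEj⟩, P, hP, rfl⟩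
  · exact ⟨E', hE', fun _ => Subset.rfl, fun _ _ => rfl, Or.inl rfl⟩
  · have hPE : P ⊆ E j := hEj.trans hQ ▸ subset_Ioo_of_mem_pieces ham hmb hP
    refine ⟨E, hE, fun k => ?_, fun k hk => Function.update_of_ne hk _ _,
      Or.inr ⟨hED, by rwa [Function.update_self]⟩⟩
    rcases eq_or_ne k j with rfl | hk
    · rwa [Function.update_self]
    · rw [Function.update_of_ne hk]

end Pieces

section Bisection

variable {G : Fin d → Finset ℕ} {Q : Box d} {j : Fin d} {a b m : ℕ}

theorem HasDyadicComponents.midSplit (hM : HasDyadicComponents G M) (hQM : Q ∈ M) (hab : a < b)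
    (hQ : Q j = Ioo (a : ℝ) b) (hm : a + b = 2 * m) (D : Box d) :
    HasDyadicComponents G (midSplit M Q j m D) := by
  intro E' hE' k
  obtain ⟨E, hE, -, hne, hj⟩ := exists_parent_of_mem_midSplit (Nat.cast_lt.2 (by omega))
    (Nat.cast_lt.2 (by omega)) hQ hE'
  by_cases hk : k = j
  · subst hk
    have hdy := hM.dyadic hQM hab hQ
    rcases hj with h | ⟨-, h | h | h⟩
    · exact h ▸ hM E hE k
    · exact Or.inr ⟨a, m, hdy.half hm (Or.inl ⟨rfl, rfl⟩), h⟩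
    · exact Or.inl ⟨m, h⟩
    · exact Or.inr ⟨m, b, hdy.half hm (Or.inr ⟨rfl, rfl⟩), h⟩
  · exact hne k hk ▸ hM E hE k

/-- Here the symmetry of the bisections enters: without it, an entity next to the bisected cell
could stick out over the splitting hyperplane. -/
theorem one_side_of_mem_midSplit (hM : HasDyadicComponents G M) (hQM : Q ∈ M) (hab : a < b)
    (hQ : Q j = Ioo (a : ℝ) b) (hm : a + b = 2 * m) {E : Box d}
    (hE : E ∈ TSpline.midSplit M Q j m fun k => closure (Q k)) (hEQ : ∀ k, E k ⊆ closure (Q k)) :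
    E j ⊆ Iio (m : ℝ) ∨ (E j).Subsingleton ∨ E j ⊆ Ioi (m : ℝ) := by
  have habR : (a : ℝ) < b := Nat.cast_lt.2 hab
  rcases (mem_midSplit habR hQ).1 hE with ⟨hEM, hns⟩ | ⟨F, -, -, P, hP, rfl⟩
  · rcases hM E hEM j with ⟨n, hn⟩ | ⟨c, e, hce, hEj⟩
    · exact Or.inr (Or.inl (hn ▸ subsingleton_singleton))
    have hsub := hEQ j
    rw [hEj, hQ, closure_Ioo habR.ne, Ioo_subset_Icc_iff (Nat.cast_lt.2 hce.lt)] at hsub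
    have hne : ¬ (c = a ∧ e = b) := fun h => hns ⟨hEQ, by rw [hEj, hQ, h.1, h.2]⟩
    rw [hEj]
    rcases hce.le_midpoint_or_midpoint_le (hM.dyadic hQM hab hQ) hm
      (Nat.cast_le.1 hsub.1) (Nat.cast_le.1 hsub.2) hne with h | h
    · exact Or.inl fun t ht => ht.2.trans_le (Nat.cast_le.2 h)
    · exact Or.inr (Or.inr fun t ht => (Nat.cast_le.2 h).trans_lt ht.1)
  · rw [Function.update_self]
    exact one_side_of_mem_pieces hP

theorem FrontierCondition.midSplit (hfr : FrontierCondition M) (hM : HasDyadicComponents G M)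
    (hQM : Q ∈ M) (hab : a < b) (hQ : Q j = Ioo (a : ℝ) b) (hm : a + b = 2 * m) :
    FrontierCondition (midSplit M Q j m fun k => closure (Q k)) := by
  have ham : (a : ℝ) < m := Nat.cast_lt.2 (by omega)
  have hmb : (m : ℝ) < b := Nat.cast_lt.2 (by omega)
  intro E' hE' F' hF' hmeet k
  obtain ⟨E, hE, hE'E, -, -⟩ := exists_parent_of_mem_midSplit ham hmb hQ hE'
  obtain ⟨F, hF, hF'F, hFne, hFj⟩ := exists_parent_of_mem_midSplit ham hmb hQ hF'
  have hEF : ∀ k, E k ⊆ closure (F k) := hfr E hE F hF fun k =>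
    (hmeet k).mono (inter_subset_inter (hE'E k) (closure_mono (hF'F k)))
  have hE'F : ∀ k, E' k ⊆ closure (F k) := fun k => (hE'E k).trans (hEF k)
  by_cases hk : k = j
  · subst hk
    rcases hFj with h | ⟨hFQ, hp⟩
    · exact h ▸ hE'F k
    · have hE'Q : ∀ l, E' l ⊆ closure (Q l) := fun l =>
        (hE'F l).trans (closure_minimal (hFQ l) isClosed_closure)
      refine subset_closure_of_mem_pieces ham hmb hp ?_
        (one_side_of_mem_midSplit hM hQM hab hQ hm hE' hE'Q) (hmeet k)
      have := hE'Q k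
      rwa [hQ, closure_Ioo (ham.trans hmb).ne] at this
  · exact hFne k hk ▸ hE'F k

end Bisection

theorem BisectStep.preserves {G : Fin d → Finset ℕ} (h : BisectStep N M M')
    (hM : HasDyadicComponents G M) (hfr : FrontierCondition M) :
    HasDyadicComponents G M' ∧ FrontierCondition M' := by
  obtain ⟨Q, hQM, j, a, b, m, hint, hQ, hm, rfl⟩ := h
  have hab : a < b := by
    obtain ⟨c, e, hce, -, h⟩ := hint j
    have hne : (Ioo (a : ℝ) b).Nonempty := hQ ▸ h ▸ nonempty_Ioo.2 (Nat.cast_lt.2 hce)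
    exact Nat.cast_lt.1 (nonempty_Ioo.1 hne)
  exact ⟨hM.midSplit hQM hab hQ hm _, hfr.midSplit hM hQM hab hQ hm⟩

theorem TMesh.frontierCondition (T : TMesh d N) : FrontierCondition T.entities := by
  obtain ⟨M₀, hM₀, hsteps⟩ := T.constructed
  obtain ⟨G, hG⟩ := hM₀.exists_hasDyadicComponents
  suffices ∀ M, Relation.ReflTransGen (BisectStep N) M₀ M →
      HasDyadicComponents G M ∧ FrontierCondition M from (this _ hsteps).2
  intro M hsteps
  induction hsteps with
  | refl => exact ⟨hG, hM₀.frontierCondition⟩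
  | tail _ hstep ih => exact hstep.preserves ih.1 ih.2

end FrontierCondition

/-! ### Entities -/

section Entities

variable {d : ℕ} {N : Fin d → ℕ} {n : ℕ} {S : Set ℝ} {E F J : Box d}

theorem mem_closure_toSet {z : Fin d → ℝ} : z ∈ closure (toSet E) ↔ ∀ k, z k ∈ closure (E k) := by
  rw [toSet, closure_pi_set, mem_univ_pi]

theorem closure_toSet_mono (h : ∀ l, E l ⊆ F l) : closure (toSet E) ⊆ closure (toSet F) :=
  closure_mono (pi_mono fun l _ => h l)

theorem eq_singleton_of_mem_singDirs {k : Fin d} (hk : k ∈ singDirs E) {z : Fin d → ℝ}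
    (hz : z ∈ toSet E) : E k = {z k} := by
  obtain ⟨r, hr⟩ := hk
  have hzr : z k = r := by simpa [hr] using hz k trivial
  rw [hr, hzr]

theorem IsIntervalComp.nonempty (hS : IsIntervalComp n S) : S.Nonempty := by
  obtain ⟨a, b, hab, -, rfl⟩ := hS
  exact nonempty_Ioo.2 (Nat.cast_lt.2 hab)

theorem IsIntervalComp.isOpen (hS : IsIntervalComp n S) : IsOpen S := by
  obtain ⟨a, b, -, -, rfl⟩ := hS
  exact isOpen_Ioo

theorem IsIntervalComp.interior_closure (hS : IsIntervalComp n S) : interior (closure S) = S := by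
  obtain ⟨a, b, hab, -, rfl⟩ := hS
  rw [closure_Ioo (Nat.cast_lt.2 hab).ne, interior_Icc]

theorem IsIntervalComp.ne_singleton (hS : IsIntervalComp n S) (r : ℝ) : S ≠ {r} := by
  obtain ⟨a, b, hab, -, rfl⟩ := hS
  exact Ioo_ne_singleton (Nat.cast_lt.2 hab) r

theorem IsIntervalComp.add_half_mem_or_sub_half_mem (hS : IsIntervalComp n S) {m : ℕ}
    (hm : (m : ℝ) ∈ closure S) : (m + 1 / 2 : ℝ) ∈ S ∨ (m - 1 / 2 : ℝ) ∈ S := by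
  obtain ⟨a, b, hab, -, rfl⟩ := hS
  rw [closure_Ioo (Nat.cast_lt.2 hab).ne] at hm
  rcases (Nat.cast_le.1 hm.2).lt_or_eq with hmb | rfl
  · have : (m + 1 : ℝ) ≤ b := by exact_mod_cast hmb
    exact Or.inl ⟨by linarith [hm.1], by linarith⟩
  · have : (a + 1 : ℝ) ≤ m := by exact_mod_cast hab
    exact Or.inr ⟨by linarith, by linarith⟩

theorem IsMeshEntity.nonempty (hE : IsMeshEntity N E) (k : Fin d) : (E k).Nonempty := by
  rcases hE k with ⟨n, -, hn⟩ | hI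
  · exact hn ▸ singleton_nonempty _
  · exact hI.nonempty

theorem IsMeshEntity.isIntervalComp (hE : IsMeshEntity N E) {k : Fin d} (hk : k ∉ singDirs E) :
    IsIntervalComp (N k) (E k) :=
  (hE k).resolve_left fun ⟨n, _, hn⟩ => hk ⟨n, hn⟩

theorem IsMeshEntity.exists_nat (hE : IsMeshEntity N E) {k : Fin d} (hk : k ∈ singDirs E) :
    ∃ n : ℕ, E k = {(n : ℝ)} := by
  rcases hE k with ⟨n, -, hn⟩ | hI
  · exact ⟨n, hn⟩
  · obtain ⟨r, hr⟩ := hk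
    exact absurd hr (hI.ne_singleton r)

theorem IsMeshEntity.subset_of_subset_closure (hJ : IsMeshEntity N J) (hE : IsMeshEntity N E)
    {k : Fin d} (hk : k ∉ singDirs J) (h : J k ⊆ closure (E k)) : J k ⊆ E k := by
  rcases hE k with ⟨n, -, hn⟩ | hI
  · rwa [hn, closure_singleton, ← hn] at h
  · rw [← hI.interior_closure]
    exact interior_maximal h (hJ.isIntervalComp hk).isOpen

theorem IsMeshEntity.singDirs_subset (hJ : IsMeshEntity N J) (h : ∀ k, J k ⊆ closure (E k)) :
    singDirs E ⊆ singDirs J := by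
  rintro k ⟨r, hr⟩
  have hJr := h k
  rw [hr, closure_singleton] at hJr
  exact ⟨r, (hJ.nonempty k).subset_singleton_iff.1 hJr⟩

theorem IsMeshEntity.subset_closure_of_subset_frontier (hJ : IsMeshEntity N J)
    (h : toSet J ⊆ frontier (toSet E)) (k : Fin d) : J k ⊆ closure (E k) := by
  have hJE : univ.pi J ⊆ univ.pi fun k => closure (E k) := by
    rw [← closure_pi_set]
    exact h.trans frontier_subset_closure
  exact (univ_pi_subset_univ_pi_iff.1 hJE).resolve_right
    (fun ⟨l, hl⟩ => (hJ.nonempty l).ne_empty hl) k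

variable {T : TMesh d N}

theorem TMesh.eq_of_mem (hE : E ∈ T.entities) (hF : F ∈ T.entities) {z : Fin d → ℝ}
    (hzE : z ∈ toSet E) (hzF : z ∈ toSet F) : E = F := by
  by_contra hne
  have hdisj := T.pairwise_disjoint E hE F hF hne
  exact (hdisj ▸ ⟨hzE, hzF⟩ : z ∈ (∅ : Set (Fin d → ℝ)))

theorem TMesh.exists_entity (T : TMesh d N) {z : Fin d → ℝ} (hz : z ∈ domain N) :
    ∃ E ∈ T.entities, z ∈ toSet E := by
  rw [← T.union_eq] at hz
  simpa using hz

theorem mem_Hdim_sub_ncard_iff {s : Set (Fin d)} (hs : s ⊆ singDirs E) :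
    E ∈ Hdim T (d - s.ncard) ↔ E ∈ T.entities ∧ singDirs E = s := by
  have hsd : s.ncard ≤ d := by simpa using ncard_le_card s
  rw [Hdim, mem_sep_iff, Nat.sub_sub_self hsd]
  refine and_congr_right fun _ => ⟨fun h => ?_, fun h => h ▸ rfl⟩
  exact (eq_of_subset_of_ncard_le hs h.le).symm

theorem mem_Hdim_self_iff : E ∈ Hdim T d ↔ E ∈ T.entities ∧ singDirs E = ∅ := by
  simpa using mem_Hdim_sub_ncard_iff (T := T) (empty_subset (singDirs E))

theorem mem_Hdim_sub_one_iff {i : Fin d} (hi : i ∈ singDirs E) :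
    E ∈ Hdim T (d - 1) ↔ E ∈ T.entities ∧ singDirs E = {i} := by
  simpa using mem_Hdim_sub_ncard_iff (T := T) (singleton_subset_iff.2 hi)

theorem mem_Hdim_sub_two_iff {i k : Fin d} (hik : i ≠ k) (hi : i ∈ singDirs E)
    (hk : k ∈ singDirs E) : E ∈ Hdim T (d - 2) ↔ E ∈ T.entities ∧ singDirs E = {i, k} := by
  simpa [ncard_pair hik] using mem_Hdim_sub_ncard_iff (T := T) (pair_subset hi hk)

theorem exists_singDirs_eq_singleton (hd : 0 < d) (hE : E ∈ Hdim T (d - 1)) :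
    ∃ i, singDirs E = {i} := by
  rw [← ncard_eq_one, hE.2]
  omega

end Entities

/-! ### The valence of a T-junction -/

section Valence

variable {d : ℕ} {N : Fin d → ℕ} {T : TMesh d N} {E J Q : Box d} {i k : Fin d}

/-- The two points at distance `1 / 2` from `q` in direction `k`. For `q` in an entity with an
integer singleton as `k`-th component, they tell apart the entities on its two sides. -/
def halfShifts (q : Fin d → ℝ) (k : Fin d) : Set (Fin d → ℝ) :=
  {Function.update q k (q k + 1 / 2), Function.update q k (q k - 1 / 2)}

theorem ncard_halfShifts_le (q : Fin d → ℝ) (k : Fin d) : (halfShifts q k).ncard ≤ 2 := by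
  simpa [halfShifts] using ncard_insert_le (Function.update q k (q k + 1 / 2))
    {Function.update q k (q k - 1 / 2)}

theorem TMesh.ncard_le_ncard_of_forall_exists_mem (T : TMesh d N) {A : Set (Box d)}
    (hA : A ⊆ T.entities) {P : Set (Fin d → ℝ)} (hP : P.Finite)
    (h : ∀ F ∈ A, ∃ p ∈ P, p ∈ toSet F) : A.ncard ≤ P.ncard := by
  choose! f hfP hf using h
  refine ncard_le_ncard_of_injOn f hfP (fun F hF F' hF' heq => ?_) hP
  exact T.eq_of_mem (hA hF) (hA hF') (hf F hF) (heq ▸ hf F' hF')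

theorem IsMeshEntity.exists_mem_halfShifts (hJ : IsMeshEntity N J) (hE : IsMeshEntity N E)
    (hJE : ∀ l, J l ⊆ closure (E l)) (hkJ : k ∈ singDirs J) (hkE : k ∉ singDirs E)
    (hne : ∀ l ∈ singDirs J, l ≠ k → J l ⊆ E l) {q : Fin d → ℝ} (hq : q ∈ toSet J) :
    ∃ p ∈ halfShifts q k, p ∈ toSet E := by
  obtain ⟨n, hn⟩ := hJ.exists_nat hkJ
  have hqk : q k = n := by simpa [hn] using hq k trivial
  have mem_of_mem : ∀ t ∈ E k, Function.update q k t ∈ toSet E := by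
    intro t ht l _
    rcases eq_or_ne l k with rfl | hl
    · rwa [Function.update_self]
    · rw [Function.update_of_ne hl]
      by_cases hlJ : l ∈ singDirs J
      · exact hne l hlJ hl (hq l trivial)
      · exact hJ.subset_of_subset_closure hE hlJ (hJE l) (hq l trivial)
  have hnE : (n : ℝ) ∈ closure (E k) := hJE k (hn ▸ mem_singleton _)
  rcases (hE.isIntervalComp hkE).add_half_mem_or_sub_half_mem hnE with h | h
  · exact ⟨_, Or.inl rfl, mem_of_mem _ (hqk ▸ h)⟩
  · exact ⟨_, Or.inr rfl, mem_of_mem _ (hqk ▸ h)⟩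

theorem exists_mem_halfShifts_of_hyperface (hik : i ≠ k) (hJ : IsMeshEntity N J)
    (hJdirs : singDirs J = {i, k}) (hE : E ∈ Hdim T (d - 1))
    (hJE : ∀ l, J l ⊆ closure (E l)) {q : Fin d → ℝ} (hq : q ∈ toSet J) :
    ∃ p ∈ halfShifts q i ∪ halfShifts q k, p ∈ toSet E := by
  have hEent := T.mem_entity E hE.1
  obtain ⟨l, hl⟩ := exists_singDirs_eq_singleton i.pos hE
  have hne : ∀ l' ∈ singDirs J, l' ∈ singDirs E → J l' ⊆ E l' := by
    rintro l' - ⟨r, hr⟩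
    simpa [hr] using hJE l'
  have hlJ : l ∈ ({i, k} : Set (Fin d)) := hJdirs ▸ hJ.singDirs_subset hJE (hl ▸ rfl)
  rcases hlJ with rfl | rfl
  · obtain ⟨p, hp, hpE⟩ := hJ.exists_mem_halfShifts hEent hJE (k := k) (by simp [hJdirs])
      (by simp [hl, hik.symm])
      (fun l' hl' hl'k => hne l' hl' (by simp_all)) hq
    exact ⟨p, Or.inr hp, hpE⟩
  · obtain ⟨p, hp, hpE⟩ := hJ.exists_mem_halfShifts hEent hJE (k := i) (by simp [hJdirs])
      (by simp [hl, hik])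
      (fun l' hl' hl'i => hne l' hl' (by simp_all)) hq
    exact ⟨p, Or.inl hp, hpE⟩

theorem TJData.valence_lt_four (h : TJData T J Q i k) (hJ : J ∈ Hdim T (d - 2)) :
    valence T J < 4 := by
  obtain ⟨hQ, hJQ, -, hik, hi, hk, hJiQ, -, -⟩ := h
  have hJent := T.mem_entity J hJ.1
  have hJdirs := ((mem_Hdim_sub_two_iff hik hi hk).1 hJ).2
  have hQdirs := (mem_Hdim_self_iff.1 hQ).2
  obtain ⟨q, hq⟩ : (toSet J).Nonempty := univ_pi_nonempty_iff.2 hJent.nonempty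
  obtain ⟨p, hp, hpQ⟩ := hJent.exists_mem_halfShifts (T.mem_entity Q hQ.1)
    (hJent.subset_closure_of_subset_frontier hJQ) hk (hQdirs ▸ notMem_empty k)
    (fun l hl hlk => by
      obtain rfl : l = i := (hJdirs ▸ hl : l ∈ ({i, k} : Set _)).resolve_right hlk
      exact hJiQ) hq
  set P := halfShifts q i ∪ halfShifts q k
  have hPfin : P.Finite := (toFinite {_, _}).union (toFinite {_, _})
  have hPcard : P.ncard ≤ 4 :=
    (ncard_union_le _ _).trans (add_le_add (ncard_halfShifts_le q i) (ncard_halfShifts_le q k))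
  have hpP : p ∈ P := Or.inr hp
  refine (T.ncard_le_ncard_of_forall_exists_mem (P := P \ {p}) (fun F hF => hF.1.1)
    hPfin.sdiff fun F hF => ?_).trans_lt
    ((ncard_sdiff_singleton_lt_of_mem hpP hPfin).trans_le hPcard)
  obtain ⟨p', hp', hp'F⟩ := exists_mem_halfShifts_of_hyperface hik hJent hJdirs hF.1
    (hJent.subset_closure_of_subset_frontier hF.2) hq
  refine ⟨p', ⟨hp', ?_⟩, hp'F⟩
  rintro rfl
  obtain rfl := T.eq_of_mem hF.1.1 hQ.1 hp'F hpQ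
  obtain ⟨l, hl⟩ := exists_singDirs_eq_singleton i.pos hF.1
  exact singleton_ne_empty l (hl.symm.trans hQdirs)

end Valence

/-! ### Ridges between a cell and a hyperface -/

section Ridge

variable {d : ℕ} {N : Fin d → ℕ} {n : ℕ} {S : Set ℝ} {T : TMesh d N} {E J P Q : Box d}
  {i k : Fin d}

theorem IsIntervalComp.subset_Ioo (hS : IsIntervalComp n S) : S ⊆ Ioo (0 : ℝ) n := by
  obtain ⟨a, b, -, hb, rfl⟩ := hS
  exact Ioo_subset_Ioo a.cast_nonneg (Nat.cast_le.2 hb)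

theorem IsMeshEntity.subset_Icc (hE : IsMeshEntity N E) (k : Fin d) :
    E k ⊆ Icc (0 : ℝ) (N k) := by
  rcases hE k with ⟨n, hnN, hn⟩ | hI
  · exact hn ▸ singleton_subset_iff.2 ⟨n.cast_nonneg, Nat.cast_le.2 hnN⟩
  · exact hI.subset_Ioo.trans Ioo_subset_Icc_self

theorem IsMeshEntity.isIntervalComp_of_ne_natCast (hE : IsMeshEntity N E) {r : ℝ} (hr : r ∈ E k)
    (hrn : ∀ n : ℕ, r ≠ n) : IsIntervalComp (N k) (E k) :=
  (hE k).resolve_left fun ⟨n, _, hn⟩ => hrn n (by simpa [hn] using hr)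

theorem isIntervalComp_of_mem_Hdim_self (hQ : Q ∈ Hdim T d) (k : Fin d) :
    IsIntervalComp (N k) (Q k) :=
  (T.mem_entity Q hQ.1).isIntervalComp ((mem_Hdim_self_iff.1 hQ).2 ▸ notMem_empty k)

theorem not_subset_bdryDomain {q : Fin d → ℝ} (hqJ : q ∈ toSet J)
    (hq : ∀ l, q l ∈ Ioo (0 : ℝ) (N l)) : ¬ toSet J ⊆ bdryDomain N := by
  refine fun hJ => (hJ hqJ).2 ?_
  rw [domain, interior_pi_set finite_univ]
  simpa only [interior_Icc, mem_univ_pi] using hq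

theorem tjData_of_subset_closure (hQ : Q ∈ Hdim T d) (hJQ : ∀ l, J l ⊆ closure (Q l)) {r s : ℝ}
    (hJi : J i = {r}) (hr : r ∈ Q i) (hJk : J k = {s}) (hs : s ∉ Q k) : TJData T J Q i k := by
  have hik : i ≠ k := by
    rintro rfl
    exact hs (singleton_injective (hJi.symm.trans hJk) ▸ hr)
  refine ⟨hQ, fun z hz => ⟨?_, fun hzQ => ?_⟩, ?_, hik, ⟨r, hJi⟩, ⟨s, hJk⟩, ?_, ?_, ?_⟩
  · exact mem_closure_toSet.2 fun l => hJQ l (hz l trivial)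
  · have hzk : z k = s := by simpa [hJk] using hz k trivial
    exact hs (hzk ▸ interior_subset hzQ k trivial)
  · refine eq_empty_of_forall_notMem fun z ⟨hzJ, hzQ⟩ => ?_
    have hzi : z i = r := by simpa [hJi] using mem_closure_toSet.1 hzJ i
    have hfr : z i ∈ frontier (Q i) := hzQ i trivial
    rw [(isIntervalComp_of_mem_Hdim_self hQ i).isOpen.frontier_eq] at hfr
    exact hfr.2 (hzi ▸ hr)
  · exact hJi ▸ singleton_subset_iff.2 hr
  · exact hJi ▸ ((isIntervalComp_of_mem_Hdim_self hQ i).ne_singleton r).symm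
  · exact fun u hu => ⟨hJQ k hu, fun huQ => hs ((hJk ▸ hu : u ∈ {s}) ▸ interior_subset huQ)⟩

theorem exists_tjunction_of_mem_frontier (hik : i ≠ k) (hQ : Q ∈ Hdim T d) (hP : P ∈ T.entities)
    (hi : i ∈ singDirs P) {q : Fin d → ℝ} (hqP : q ∈ closure (toSet P))
    (hqQ : ∀ l ≠ k, q l ∈ Q l) (hqk : q k ∈ frontier (Q k)) (hqdom : q k ∈ Ioo (0 : ℝ) (N k))
    (hqn : ∀ l, l ≠ i → l ≠ k → ∀ n : ℕ, q l ≠ n) :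
    ∃ J ∈ T.entities, q ∈ toSet J ∧ IsTJunction T J ∧ TJData T J Q i k := by
  have hQint := isIntervalComp_of_mem_Hdim_self hQ
  have hqN : ∀ l, q l ∈ Ioo (0 : ℝ) (N l) := fun l => by
    by_cases hl : l = k
    · exact hl ▸ hqdom
    · exact (hQint l).subset_Ioo (hqQ l hl)
  have hqk' : q k ∉ Q k := by
    rw [(hQint k).isOpen.frontier_eq] at hqk
    exact hqk.2
  obtain ⟨J, hJ, hqJ⟩ := T.exists_entity fun l _ => Ioo_subset_Icc_self (hqN l)
  have hJent := T.mem_entity J hJ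
  have hJQ : ∀ l, J l ⊆ closure (Q l) := T.frontierCondition J hJ Q hQ.1 fun l => by
    refine ⟨q l, hqJ l trivial, ?_⟩
    by_cases hl : l = k
    · exact hl ▸ frontier_subset_closure hqk
    · exact subset_closure (hqQ l hl)
  have hJP : ∀ l, J l ⊆ closure (P l) := T.frontierCondition J hJ P hP fun l =>
    ⟨q l, hqJ l trivial, mem_closure_toSet.1 hqP l⟩
  have hiJ : i ∈ singDirs J := hJent.singDirs_subset hJP hi
  have hkJ : k ∈ singDirs J := by
    by_contra hk
    exact hqk' (hJent.subset_of_subset_closure (T.mem_entity Q hQ.1) hk (hJQ k) (hqJ k trivial))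
  have hJdata : TJData T J Q i k := tjData_of_subset_closure hQ hJQ
    (eq_singleton_of_mem_singDirs hiJ hqJ) (hqQ i hik) (eq_singleton_of_mem_singDirs hkJ hqJ) hqk'
  have hJdirs : singDirs J = {i, k} := by
    refine (pair_subset hiJ hkJ).antisymm' fun l hl => ?_
    by_contra hlik
    simp only [mem_insert_iff, mem_singleton_iff, not_or] at hlik
    exact (hJent.isIntervalComp_of_ne_natCast (hqJ l trivial) (hqn l hlik.1 hlik.2)).ne_singleton _
      (eq_singleton_of_mem_singDirs hl hqJ)
  have hJdim : J ∈ Hdim T (d - 2) := (mem_Hdim_sub_two_iff hik hiJ hkJ).2 ⟨hJ, hJdirs⟩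
  exact ⟨J, hJ, hqJ, ⟨hJdim, not_subset_bdryDomain hqJ hqN, hJdata.valence_lt_four hJdim⟩, hJdata⟩

end Ridge

/-! ### Unit faces -/

section UnitFace

theorem Ioo_add_one_subset_Ioo {a b : ℕ} {c : ℤ} (hac : (a : ℝ) < c + 1) (hcb : (c : ℝ) < b) :
    Ioo (c : ℝ) (c + 1) ⊆ Ioo (a : ℝ) b := by
  have hac' : (a : ℤ) ≤ c := Int.lt_add_one_iff.1 (by exact_mod_cast hac)
  have hcb' : c + 1 ≤ (b : ℤ) := Int.add_one_le_iff.2 (by exact_mod_cast hcb)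
  exact Ioo_subset_Ioo (by exact_mod_cast hac') (by exact_mod_cast hcb')

theorem Ioo_add_one_subset_Icc {n : ℕ} {c : ℤ} {r : ℝ} (hr : r ∈ Ioo (c : ℝ) (c + 1))
    (hrn : r ∈ Icc (0 : ℝ) n) : Ioo (c : ℝ) (c + 1) ⊆ Icc (0 : ℝ) n := by
  have hsub := Ioo_add_one_subset_Ioo (a := 0) (by simpa using hrn.1.trans_lt hr.2)
    (hr.1.trans_le hrn.2)
  exact (Nat.cast_zero (R := ℝ) ▸ hsub).trans Ioo_subset_Icc_self

theorem mem_Ioo_of_mem_Icc_add_one {n : ℕ} {m c : ℤ} (hmc : m ≠ c) {r : ℝ}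
    (hm : Ioo (m : ℝ) (m + 1) ⊆ Ioo (0 : ℝ) n) (hc : Ioo (c : ℝ) (c + 1) ⊆ Ioo (0 : ℝ) n)
    (hrm : r ∈ Icc (m : ℝ) (m + 1)) (hrc : r ∈ Icc (c : ℝ) (c + 1)) : r ∈ Ioo (0 : ℝ) n := by
  rw [Ioo_subset_Ioo_iff (lt_add_one _)] at hm hc
  rcases hmc.lt_or_gt with h | h
  · have : (m + 1 : ℝ) ≤ c := by exact_mod_cast h
    constructor <;> linarith [hm.1, hc.2, hrm.2, hrc.1]
  · have : (c + 1 : ℝ) ≤ m := by exact_mod_cast h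
    constructor <;> linarith [hc.1, hm.2, hrc.2, hrm.1]

variable {d : ℕ} {N : Fin d → ℕ} {n : ℕ} {S : Set ℝ} {T : TMesh d N} {E P Q : Box d}
  {i k : Fin d} {t : ℝ} {m : Fin d → ℤ} {c : ℤ} {z : Fin d → ℝ}

theorem ne_natCast_of_mem_Ioo_add_one {r : ℝ} (hr : r ∈ Ioo (c : ℝ) (c + 1)) (n : ℕ) : r ≠ n := by
  rintro rfl
  have h₁ : c < n := by exact_mod_cast hr.1
  have h₂ : (n : ℤ) < c + 1 := by exact_mod_cast hr.2
  omega

theorem IsIntervalComp.Ioo_add_one_subset (hS : IsIntervalComp n S) {r : ℝ} (hr : r ∈ S)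
    (hrc : r ∈ Icc (c : ℝ) (c + 1)) : Ioo (c : ℝ) (c + 1) ⊆ S := by
  obtain ⟨a, b, -, -, rfl⟩ := hS
  exact Ioo_add_one_subset_Ioo (hr.1.trans_le hrc.2) (hrc.1.trans_lt hr.2)

theorem IsIntervalComp.exists_Ioo_add_one_subset (hS : IsIntervalComp n S) {r : ℝ}
    (hr : r ∈ closure S) : ∃ c : ℤ, r ∈ Icc (c : ℝ) (c + 1) ∧ Ioo (c : ℝ) (c + 1) ⊆ S := by
  obtain ⟨a, b, hab, -, rfl⟩ := hS
  rw [closure_Ioo (Nat.cast_lt.2 hab).ne] at hr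
  rcases hr.2.lt_or_eq with hrb | rfl
  · exact ⟨⌊r⌋, ⟨Int.floor_le r, (Int.lt_floor_add_one r).le⟩,
      Ioo_add_one_subset_Ioo (hr.1.trans_lt (Int.lt_floor_add_one r))
        ((Int.floor_le r).trans_lt hrb)⟩
  · exact ⟨b - 1, by simp, Ioo_add_one_subset_Ioo (by simpa using hab) (by simp)⟩

theorem IsMeshEntity.Ioo_add_one_subset (hE : IsMeshEntity N E) {r : ℝ} (hrE : r ∈ E k)
    (hr : r ∈ Ioo (c : ℝ) (c + 1)) : Ioo (c : ℝ) (c + 1) ⊆ E k :=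
  (hE.isIntervalComp_of_ne_natCast hrE (ne_natCast_of_mem_Ioo_add_one hr)).Ioo_add_one_subset hrE
    (Ioo_subset_Icc_self hr)

theorem IsMeshEntity.Icc_add_one_subset_closure (hE : IsMeshEntity N E) {r : ℝ} (hrE : r ∈ E k)
    (hr : r ∈ Ioo (c : ℝ) (c + 1)) : Icc (c : ℝ) (c + 1) ⊆ closure (E k) := by
  rw [← closure_Ioo (lt_add_one (c : ℝ)).ne]
  exact closure_mono (hE.Ioo_add_one_subset hrE hr)

/-- The `i`-orthogonal face, at height `t`, of the unit cell with lower corner `m`. -/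
def unitFace (i : Fin d) (t : ℝ) (m : Fin d → ℤ) : Box d :=
  Function.update (fun l => Ioo (m l : ℝ) (m l + 1)) i {t}

theorem unitFace_self : unitFace i t m i = {t} := Function.update_self ..

theorem unitFace_of_ne {l : Fin d} (hl : l ≠ i) : unitFace i t m l = Ioo (m l : ℝ) (m l + 1) :=
  Function.update_of_ne hl ..

theorem mem_closure_unitFace_iff :
    z ∈ closure (toSet (unitFace i t m)) ↔
      z i = t ∧ ∀ l ≠ i, z l ∈ Icc (m l : ℝ) (m l + 1) := by
  have hcl : ∀ c : ℤ, closure (Ioo (c : ℝ) (c + 1)) = Icc (c : ℝ) (c + 1) := fun c =>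
    closure_Ioo (lt_add_one _).ne
  rw [mem_closure_toSet]
  refine ⟨fun h => ⟨by simpa [unitFace_self] using h i, fun l hl => ?_⟩, fun ⟨hi, h⟩ l => ?_⟩
  · simpa only [unitFace_of_ne hl, hcl] using h l
  · by_cases hl : l = i
    · subst hl
      simpa [unitFace_self] using hi
    · simpa only [unitFace_of_ne hl, hcl] using h l hl

theorem mem_closure_unitFace_of_forall_eq_or {a b : Fin d → ℤ}
    (ha : z ∈ closure (toSet (unitFace i t a))) (hb : z ∈ closure (toSet (unitFace i t b)))
    (hm : ∀ l, m l = a l ∨ m l = b l) : z ∈ closure (toSet (unitFace i t m)) := by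
  rw [mem_closure_unitFace_iff] at ha hb ⊢
  refine ⟨ha.1, fun l hl => ?_⟩
  rcases hm l with h | h
  · exact h ▸ ha.2 l hl
  · exact h ▸ hb.2 l hl

theorem unitFace_nonempty (i : Fin d) (t : ℝ) (m : Fin d → ℤ) :
    (toSet (unitFace i t m)).Nonempty := by
  refine univ_pi_nonempty_iff.2 fun l => ?_
  by_cases hl : l = i
  · subst hl
    exact unitFace_self ▸ singleton_nonempty t
  · exact unitFace_of_ne (t := t) hl ▸ nonempty_Ioo.2 (lt_add_one _)

theorem unitFace_update_of_ne {l : Fin d} (hl : l ≠ k) :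
    unitFace i t (Function.update m k c) l = unitFace i t m l := by
  by_cases hli : l = i
  · subst hli
    rw [unitFace_self, unitFace_self]
  · rw [unitFace_of_ne hli, unitFace_of_ne hli, Function.update_of_ne hl]

theorem IsMeshEntity.unitFace_subset (hE : IsMeshEntity N E) (hz : z ∈ toSet (unitFace i t m))
    (hzE : z ∈ toSet E) (l : Fin d) : unitFace i t m l ⊆ E l := by
  have hzl := hz l trivial
  by_cases hl : l = i
  · subst hl
    rw [unitFace_self] at hzl ⊢
    exact singleton_subset_iff.2 (hzl ▸ hzE l trivial)
  · rw [unitFace_of_ne hl] at hzl ⊢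
    exact hE.Ioo_add_one_subset (hzE l trivial) hzl

theorem TMesh.exists_unitFace_subset (T : TMesh d N) (ht : t ∈ Icc (0 : ℝ) (N i))
    (hm : ∀ l ≠ i, Ioo (m l : ℝ) (m l + 1) ⊆ Icc (0 : ℝ) (N l)) :
    ∃ E ∈ T.entities, ∀ l, unitFace i t m l ⊆ E l := by
  obtain ⟨z, hz⟩ := unitFace_nonempty i t m
  have hzN : z ∈ domain N := fun l _ => by
    have hzl := hz l trivial
    by_cases hl : l = i
    · subst hl
      rw [unitFace_self] at hzl
      exact hzl ▸ ht
    · rw [unitFace_of_ne hl] at hzl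
      exact hm l hl hzl
  obtain ⟨E, hE, hzE⟩ := T.exists_entity hzN
  exact ⟨E, hE, (T.mem_entity E hE).unitFace_subset hz hzE⟩

theorem singDirs_subset_of_unitFace_subset (hE : ∀ l, unitFace i t m l ⊆ E l) :
    singDirs E ⊆ {i} := by
  rintro l ⟨r, hr⟩
  by_contra hl
  have hsub := hE l
  rw [unitFace_of_ne hl, hr] at hsub
  exact Ioo_infinite (lt_add_one (m l : ℝ)) ((finite_singleton r).subset hsub)

theorem not_unitFace_subset_of_mem_Hdim_self (hQ : Q ∈ Hdim T d) (hP : P ∈ T.entities)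
    (hi : i ∈ singDirs P) (hPm : ∀ l, unitFace i t m l ⊆ P l) :
    ¬ ∀ l, unitFace i t m l ⊆ Q l := by
  intro hQm
  obtain ⟨z, hz⟩ := unitFace_nonempty i t m
  obtain rfl := T.eq_of_mem hP hQ.1 (fun l _ => hPm l (hz l trivial))
    fun l _ => hQm l (hz l trivial)
  exact notMem_empty i ((mem_Hdim_self_iff.1 hQ).2 ▸ hi)

/-- The situation that produces a T-junction: two unit faces around `z`, whose corners `m` and
`Function.update m k c` differ in the direction `k` only, lie in a cell `Q` and in an
`i`-orthogonal entity `P`, respectively. -/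
structure IsCrossing (T : TMesh d N) (i : Fin d) (z : Fin d → ℝ) (m : Fin d → ℤ) (k : Fin d)
    (c : ℤ) (Q P : Box d) : Prop where
  ne : k ≠ i
  cell : Q ∈ Hdim T d
  subset_cell : ∀ l, unitFace i (z i) m l ⊆ Q l
  mem_entities : P ∈ T.entities
  orthogonal : i ∈ singDirs P
  subset_entity : ∀ l, unitFace i (z i) (Function.update m k c) l ⊆ P l
  mem_closure : z ∈ closure (toSet (unitFace i (z i) m))
  mem_closure_update : z ∈ closure (toSet (unitFace i (z i) (Function.update m k c)))

theorem IsCrossing.mem_frontier (h : IsCrossing T i z m k c Q P) :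
    z k ∈ frontier (Q k) ∧ z k ∈ Ioo (0 : ℝ) (N k) := by
  obtain ⟨hki, hQ, hQm, hP, hi, hPm, hzm, hzc⟩ := h
  have hQint := isIntervalComp_of_mem_Hdim_self hQ k
  have hPint : IsIntervalComp (N k) (P k) :=
    (T.mem_entity P hP).isIntervalComp fun h => hki (singDirs_subset_of_unitFace_subset hPm h)
  have hmQ : Ioo (m k : ℝ) (m k + 1) ⊆ Q k := unitFace_of_ne hki ▸ hQm k
  have hcP : Ioo (c : ℝ) (c + 1) ⊆ P k := by
    simpa [unitFace_of_ne hki] using hPm k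
  have hcQ : ¬ Ioo (c : ℝ) (c + 1) ⊆ Q k := fun hc =>
    not_unitFace_subset_of_mem_Hdim_self hQ hP hi hPm fun l => by
      by_cases hl : l = k
      · subst hl
        rwa [unitFace_of_ne hki, Function.update_self]
      · rw [unitFace_update_of_ne hl]
        exact hQm l
  have hmc : m k ≠ c := by
    rintro rfl
    exact hcQ hmQ
  have hzkm : z k ∈ Icc (m k : ℝ) (m k + 1) := (mem_closure_unitFace_iff.1 hzm).2 k hki
  have hzkc : z k ∈ Icc (c : ℝ) (c + 1) := by
    simpa using (mem_closure_unitFace_iff.1 hzc).2 k hki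
  refine ⟨?_, mem_Ioo_of_mem_Icc_add_one hmc (hmQ.trans hQint.subset_Ioo)
    (hcP.trans hPint.subset_Ioo) hzkm hzkc⟩
  rw [hQint.isOpen.frontier_eq]
  exact ⟨mem_closure_toSet.1 (closure_toSet_mono hQm hzm) k,
    fun h => hcQ (hQint.Ioo_add_one_subset h hzkc)⟩

theorem IsCrossing.exists_tjunction (h : IsCrossing T i z m k c Q P) :
    ∃ J, IsTJunction T J ∧ TJData T J Q i k ∧ z ∈ closure (toSet J) ∧ J i = {z i} := by
  obtain ⟨hfr, hdom⟩ := h.mem_frontier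
  obtain ⟨hki, hQ, hQm, hP, hi, hPm, hzm, hzc⟩ := h
  have hzIcc := (mem_closure_unitFace_iff.1 hzm).2
  obtain ⟨w, hw⟩ := unitFace_nonempty i (z i) m
  have hwi : w i = z i := by simpa [unitFace_self] using hw i trivial
  have hwIoo : ∀ l ≠ i, w l ∈ Ioo (m l : ℝ) (m l + 1) := fun l hl =>
    unitFace_of_ne (t := z i) hl ▸ hw l trivial
  set q := Function.update w k (z k)
  have hqk : q k = z k := Function.update_self ..
  have hqw : ∀ l ≠ k, q l = w l := fun l hl => Function.update_of_ne hl ..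
  have hqP : q ∈ closure (toSet P) := mem_closure_toSet.2 fun l => by
    by_cases hl : l = k
    · rw [hl, hqk]
      exact mem_closure_toSet.1 (closure_toSet_mono hPm hzc) k
    · rw [hqw l hl]
      refine subset_closure (hPm l ?_)
      rw [unitFace_update_of_ne hl]
      exact hw l trivial
  have hqn : ∀ l, l ≠ i → l ≠ k → ∀ n : ℕ, q l ≠ n := fun l hli hlk =>
    hqw l hlk ▸ ne_natCast_of_mem_Ioo_add_one (hwIoo l hli)
  obtain ⟨J, hJ, hqJ, hTJ, hJdata⟩ := exists_tjunction_of_mem_frontier hki.symm hQ hP hi hqP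
    (fun l hl => hqw l hl ▸ hQm l (hw l trivial)) (hqk ▸ hfr) (hqk ▸ hdom) hqn
  refine ⟨J, hTJ, hJdata, mem_closure_toSet.2 fun l => ?_, ?_⟩
  · have hqJl := hqJ l trivial
    rcases eq_or_ne l k with rfl | hlk
    · exact subset_closure (hqk ▸ hqJl)
    rcases eq_or_ne l i with rfl | hli
    · exact subset_closure (hwi ▸ hqw l hlk ▸ hqJl)
    exact (T.mem_entity J hJ).Icc_add_one_subset_closure hqJl (hqw l hlk ▸ hwIoo l hli)
      (hzIcc l hli)
  · obtain ⟨-, -, -, -, hiJ, -⟩ := hJdata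
    rw [eq_singleton_of_mem_singDirs hiJ hqJ, hqw i hki.symm, hwi]

end UnitFace

/-! ### From the last skeleton point to a crossing -/

section Segment

open AffineMap (lineMap)
open scoped Topology

variable {ι : Type*}

theorem exists_not_and_update [Finite ι] [DecidableEq ι] {α : Type*}
    {p : (ι → α) → Prop} {a b : ι → α}
    (ha : ¬ p a) (hb : p b) :
    ∃ f k, (∀ l, f l = a l ∨ f l = b l) ∧ f k = a k ∧ a k ≠ b k ∧
      ¬ p f ∧ p (Function.update f k (b k)) := by
  have := Fintype.ofFinite ι
  by_contra! hstep
  have hnot : ∀ s : Finset ι, ¬ p (s.piecewise b a) := by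
    intro s
    induction s using Finset.induction with
    | empty => rwa [Finset.piecewise_empty]
    | insert k s hk ih =>
      rw [Finset.piecewise_insert]
      have hfk : s.piecewise b a k = a k := Finset.piecewise_eq_of_notMem _ _ _ hk
      by_cases hab : a k = b k
      · rwa [← hab, ← hfk, Function.update_eq_self]
      · exact hstep _ k (fun l => s.piecewise_cases b a (fun v => v = a l ∨ v = b l)
          (Or.inr rfl) (Or.inl rfl)) hfk hab ih
  exact hnot Finset.univ (by rwa [Finset.piecewise_univ])

theorem apply_mem_uIcc_of_mem_segment {x y z : ι → ℝ} (hz : z ∈ segment ℝ x y) (l : ι) :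
    z l ∈ uIcc (x l) (y l) := by
  have hconv : Convex ℝ (univ.pi fun l => uIcc (x l) (y l)) := convex_pi fun _ _ => convex_uIcc _ _
  exact hconv.segment_subset (fun _ _ => left_mem_uIcc) (fun _ _ => right_mem_uIcc) hz l trivial

theorem exists_last_lineMap_mem {E : Type*} [AddCommGroup E] [Module ℝ E] [TopologicalSpace E]
    [IsTopologicalAddGroup E] [ContinuousSMul ℝ E] {S : Set E} (hS : IsClosed S) {x y : E}
    (hx : x ∈ S) (hy : y ∉ S) :
    ∃ s ∈ Ico (0 : ℝ) 1, lineMap x y s ∈ S ∧ ∀ t ∈ Ioc s 1, lineMap x y t ∉ S := by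
  have hcpt : IsCompact (Icc (0 : ℝ) 1 ∩ lineMap x y ⁻¹' S) :=
    isCompact_Icc.inter_right (hS.preimage AffineMap.lineMap_continuous)
  obtain ⟨s, ⟨hs, hsS⟩, hmax⟩ := hcpt.exists_isGreatest ⟨0, by simpa using hx⟩
  have hs1 : s ≠ 1 := by
    rintro rfl
    exact hy (by simpa using hsS)
  exact ⟨s, ⟨hs.1, hs.2.lt_of_ne hs1⟩, hsS, fun t ht htS =>
    ht.1.not_ge (hmax ⟨⟨hs.1.trans ht.1.le, ht.2⟩, htS⟩)⟩

theorem exists_int_eventually_lineMap_mem_Ioo {a b : ℝ} (hab : a ≠ b) (s : ℝ) :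
    ∃ m : ℤ, lineMap a b s ∈ Icc (m : ℝ) (m + 1) ∧
      ∀ᶠ t in 𝓝[>] s, lineMap a b t ∈ Ioo (m : ℝ) (m + 1) := by
  set r := lineMap a b s
  have hcont : Filter.Tendsto (lineMap a b : ℝ → ℝ) (𝓝[>] s) (𝓝 r) :=
    AffineMap.lineMap_continuous.continuousWithinAt
  rcases hab.lt_or_gt with hlt | hgt
  · have hr : r < ⌊r⌋ + 1 := Int.lt_floor_add_one r
    refine ⟨⌊r⌋, ⟨Int.floor_le r, hr.le⟩, ?_⟩
    filter_upwards [hcont.eventually_lt_const hr, self_mem_nhdsWithin] with t ht hst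
    exact ⟨(Int.floor_le r).trans_lt ((lineMap_lt_lineMap_iff_of_lt hst).2 hlt), ht⟩
  · have hr : ((⌈r⌉ - 1 : ℤ) : ℝ) < r := by
      push_cast
      linarith [Int.ceil_lt_add_one r]
    have hr' : r ≤ ((⌈r⌉ - 1 : ℤ) : ℝ) + 1 := by simpa using Int.le_ceil r
    refine ⟨⌈r⌉ - 1, ⟨hr.le, hr'⟩, ?_⟩
    filter_upwards [hcont.eventually_const_lt hr, self_mem_nhdsWithin] with t ht hst
    have htr : lineMap b a (1 - t) < lineMap b a (1 - s) :=
      (lineMap_lt_lineMap_iff_of_lt (sub_lt_sub_left hst 1)).2 hgt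
    rw [AffineMap.lineMap_apply_one_sub, AffineMap.lineMap_apply_one_sub] at htr
    exact ⟨ht, htr.trans_le hr'⟩

theorem exists_lineMap_mem_Ioo_add_one [Finite ι] (x y : ι → ℝ) {s : ℝ} (hs : s < 1) :
    ∃ m : ι → ℤ, ∃ t ∈ Ioc s 1, ∀ l, x l ≠ y l →
      lineMap x y s l ∈ Icc (m l : ℝ) (m l + 1) ∧ lineMap x y t l ∈ Ioo (m l : ℝ) (m l + 1) := by
  have hunit : ∀ l, ∃ m : ℤ, x l ≠ y l → lineMap x y s l ∈ Icc (m : ℝ) (m + 1) ∧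
      ∀ᶠ t in 𝓝[>] s, lineMap x y t l ∈ Ioo (m : ℝ) (m + 1) := fun l => by
    by_cases hl : x l = y l
    · exact ⟨0, fun h => absurd hl h⟩
    · simp only [AffineMap.pi_lineMap_apply]
      exact (exists_int_eventually_lineMap_mem_Ioo hl s).imp fun _ h _ => h
  choose m hm using hunit
  have hev : ∀ᶠ t in 𝓝[>] s, ∀ l, x l ≠ y l → lineMap x y t l ∈ Ioo (m l : ℝ) (m l + 1) :=
    Filter.eventually_all.2 fun l => Filter.eventually_imp_distrib_left.2 fun hl => (hm l hl).2
  obtain ⟨t, ht, hts⟩ := (hev.and (Ioc_mem_nhdsGT hs)).exists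
  exact ⟨m, t, hts, fun l hl => ⟨(hm l hl).1, ht l hl⟩⟩

end Segment

section Crossing

variable {d : ℕ} {N : Fin d → ℕ} {T : TMesh d N} {i : Fin d} {t : ℝ}
  {m : Fin d → ℤ} {x y z : Fin d → ℝ}

theorem mem_skel_iff : z ∈ skel T i ↔
    ∃ F ∈ T.entities, singDirs F = {i} ∧ z ∈ closure (toSet F) := by
  simp only [skel, mem_iUnion, mem_ofPred_eq, exists_prop, ← and_assoc]
  refine exists_congr fun F => and_congr_left fun _ => ⟨fun ⟨hF, hi⟩ => ?_, fun h => ?_⟩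
  · exact (mem_Hdim_sub_one_iff hi).1 hF
  · have hi : i ∈ singDirs F := h.2 ▸ mem_singleton i
    exact ⟨(mem_Hdim_sub_one_iff hi).2 h, hi⟩

theorem isClosed_skel (T : TMesh d N) (i : Fin d) : IsClosed (skel T i) :=
  (T.finite.subset fun _ hF => hF.1.1).isClosed_biUnion fun _ _ => isClosed_closure

/-- The unit face with corner `m` at height `t` lies in an `i`-orthogonal entity of `T`. -/
def IsCovered (T : TMesh d N) (i : Fin d) (t : ℝ) (m : Fin d → ℤ) : Prop :=
  ∃ P ∈ T.entities, i ∈ singDirs P ∧ ∀ l, unitFace i t m l ⊆ P l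

theorem IsCovered.mem_skel (h : IsCovered T i t m) (hz : z ∈ closure (toSet (unitFace i t m))) :
    z ∈ skel T i := by
  obtain ⟨P, hP, hi, hPm⟩ := h
  exact mem_skel_iff.2 ⟨P, hP,
    (singDirs_subset_of_unitFace_subset hPm).antisymm (singleton_subset_iff.2 hi),
    closure_toSet_mono hPm hz⟩

theorem exists_cell_of_not_isCovered (h : ¬ IsCovered T i t m) (ht : t ∈ Icc (0 : ℝ) (N i))
    (hm : ∀ l ≠ i, Ioo (m l : ℝ) (m l + 1) ⊆ Icc (0 : ℝ) (N l)) :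
    ∃ Q ∈ Hdim T d, ∀ l, unitFace i t m l ⊆ Q l := by
  obtain ⟨Q, hQ, hQm⟩ := T.exists_unitFace_subset ht hm
  refine ⟨Q, mem_Hdim_self_iff.2 ⟨hQ, ?_⟩, hQm⟩
  refine (subset_singleton_iff_eq.1 (singDirs_subset_of_unitFace_subset hQm)).resolve_right ?_
  exact fun hi => h ⟨Q, hQ, hi ▸ mem_singleton i, hQm⟩

theorem exists_isCovered_of_mem_skel (hz : z ∈ skel T i) :
    ∃ m, IsCovered T i (z i) m ∧ z ∈ closure (toSet (unitFace i (z i) m)) := by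
  obtain ⟨F, hF, hFi, hzF⟩ := mem_skel_iff.1 hz
  have hi : i ∈ singDirs F := hFi ▸ mem_singleton i
  have hzF' := mem_closure_toSet.1 hzF
  have hunit : ∀ l, ∃ c : ℤ, l ≠ i → z l ∈ Icc (c : ℝ) (c + 1) ∧ Ioo (c : ℝ) (c + 1) ⊆ F l :=
    fun l => by
      by_cases hl : l = i
      · exact ⟨0, fun h => absurd hl h⟩
      · exact (((T.mem_entity F hF).isIntervalComp (hFi ▸ hl)).exists_Ioo_add_one_subset
          (hzF' l)).imp fun _ h _ => h
  choose m hm using hunit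
  refine ⟨m, ⟨F, hF, hi, fun l => ?_⟩, mem_closure_unitFace_iff.2 ⟨rfl, fun l hl => (hm l hl).1⟩⟩
  by_cases hl : l = i
  · subst hl
    obtain ⟨r, hr⟩ := hi
    have hzr : z l = r := by simpa [hr] using hzF' l
    rw [unitFace_self, hr, hzr]
  · exact unitFace_of_ne (t := z i) hl ▸ (hm l hl).2

theorem exists_unitFaces_at_gap (hxy : x i = y i) (hx : x ∈ skel T i) (hy : y ∉ skel T i) :
    ∃ z ∈ segment ℝ x y, ∃ w ∈ segment ℝ x y, ∃ a b : Fin d → ℤ,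
      (∀ l, x l = y l → a l = b l) ∧ (∀ l, x l ≠ y l → w l ∈ Ioo (a l : ℝ) (a l + 1)) ∧
      ¬ IsCovered T i (z i) a ∧ z ∈ closure (toSet (unitFace i (z i) a)) ∧
      IsCovered T i (z i) b ∧ z ∈ closure (toSet (unitFace i (z i) b)) := by
  obtain ⟨s, hs, hzs, hafter⟩ := exists_last_lineMap_mem (isClosed_skel T i) hx hy
  obtain ⟨m, t, ht, hm⟩ := exists_lineMap_mem_Ioo_add_one x y hs.2
  set z := AffineMap.lineMap x y s
  set w := AffineMap.lineMap x y t
  obtain ⟨b, hb, hzb⟩ := exists_isCovered_of_mem_skel hzs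
  have hzxy : z ∈ segment ℝ x y := segment_eq_image_lineMap ℝ x y ▸
    mem_image_of_mem _ ⟨hs.1, hs.2.le⟩
  have hwxy : w ∈ segment ℝ x y := segment_eq_image_lineMap ℝ x y ▸
    mem_image_of_mem _ ⟨hs.1.trans ht.1.le, ht.2⟩
  have hwz : ∀ l, x l = y l → w l = z l := fun l hl => by
    have hwl := apply_mem_uIcc_of_mem_segment hwxy l
    have hzl := apply_mem_uIcc_of_mem_segment hzxy l
    rw [← hl, uIcc_self, mem_singleton_iff] at hwl hzl
    rw [hwl, hzl]
  have hzb' := (mem_closure_unitFace_iff.1 hzb).2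
  let a : Fin d → ℤ := fun l => if x l = y l then b l else m l
  have hab : ∀ l, x l = y l → a l = b l := fun l hl => if_pos hl
  have ham : ∀ l, x l ≠ y l → a l = m l := fun l hl => if_neg hl
  have hza : z ∈ closure (toSet (unitFace i (z i) a)) :=
    mem_closure_unitFace_iff.2 ⟨rfl, fun l hli => by
      by_cases hl : x l = y l
      · exact hab l hl ▸ hzb' l hli
      · exact ham l hl ▸ (hm l hl).1⟩
  have hwa : w ∈ closure (toSet (unitFace i (z i) a)) :=
    mem_closure_unitFace_iff.2 ⟨hwz i hxy, fun l hli => by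
      by_cases hl : x l = y l
      · exact hab l hl ▸ hwz l hl ▸ hzb' l hli
      · exact ham l hl ▸ Ioo_subset_Icc_self (hm l hl).2⟩
  exact ⟨z, hzxy, w, hwxy, a, b, hab, fun l hl => ham l hl ▸ (hm l hl).2,
    fun h => hafter t ht (h.mem_skel hwa), hza, hb, hzb⟩

theorem convex_domain : Convex ℝ (domain N) := convex_pi fun _ _ => convex_Icc _ _

theorem exists_isCrossing (hx : x ∈ domain N) (hy : y ∈ domain N) (hxy : x i = y i)
    (hxs : x ∈ skel T i) (hys : y ∉ skel T i) :
    ∃ z ∈ segment ℝ x y, ∃ m k c Q P, IsCrossing T i z m k c Q P ∧ x k ≠ y k ∧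
      (Q k ∩ uIcc (x k) (y k)).Nonempty := by
  obtain ⟨z, hz, w, hw, a, b, hab, hwa, ha, hza, hb, hzb⟩ := exists_unitFaces_at_gap hxy hxs hys
  obtain ⟨m, k, hm, hmk, habk, hmc, P, hP, hi, hPm⟩ := exists_not_and_update ha hb
  have hxyk : x k ≠ y k := fun h => habk (hab k h)
  have hki : k ≠ i := fun h => hxyk (h ▸ hxy)
  have hzN : z ∈ domain N := convex_domain.segment_subset hx hy hz
  have hwN : w ∈ domain N := convex_domain.segment_subset hx hy hw
  have hbN : ∀ l ≠ i, Ioo (b l : ℝ) (b l + 1) ⊆ Icc (0 : ℝ) (N l) := by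
    obtain ⟨F, hF, -, hbF⟩ := hb
    exact fun l hl => unitFace_of_ne (t := z i) hl ▸
      (hbF l).trans ((T.mem_entity F hF).subset_Icc l)
  have hmN : ∀ l ≠ i, Ioo (m l : ℝ) (m l + 1) ⊆ Icc (0 : ℝ) (N l) := fun l hl => by
    by_cases hml : m l = b l
    · exact hml ▸ hbN l hl
    · have hma := (hm l).resolve_right hml
      have hxyl : x l ≠ y l := fun h => hml (hma.trans (hab l h))
      exact hma ▸ Ioo_add_one_subset_Icc (hwa l hxyl) (hwN l trivial)
  obtain ⟨Q, hQ, hQm⟩ := exists_cell_of_not_isCovered hmc (hzN i trivial) hmN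
  have hzm := mem_closure_unitFace_of_forall_eq_or hza hzb hm
  have hzc := mem_closure_unitFace_of_forall_eq_or hzm hzb (m := Function.update m k (b k))
    fun l => by rcases eq_or_ne l k with rfl | hl <;> simp [*]
  have hwQ : w k ∈ Q k := hQm k (by rw [unitFace_of_ne hki, hmk]; exact hwa k hxyk)
  exact ⟨z, hz, m, k, b k, Q, P, ⟨hki, hQ, hQm, hP, hi, hPm, hzm, hzc⟩, hxyk, w k, hwQ,
    apply_mem_uIcc_of_mem_segment hw k⟩

end Crossing

end TSpline

/-- If `x, y ∈ cl Ω` are aligned in direction `i`, `x ∈ Sk_i` and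
`y ∉ Sk_i`, then there is an `i`-orthogonal T-junction and its associated cell between
them. -/
theorem TSpline.skeleton_gap_has_tjunction
    {d : ℕ} {N : Fin d → ℕ} (hd : 2 ≤ d) (T : TSpline.TMesh d N) (i : Fin d)
    (x y : Fin d → ℝ) (hx : x ∈ TSpline.domain N) (hy : y ∈ TSpline.domain N)
    (hxyi : x i = y i) (hxs : x ∈ TSpline.skel T i) (hys : y ∉ TSpline.skel T i) :
    ∃ J Q : TSpline.Box d, ∃ k : Fin d,
      TSpline.IsTJunction T J ∧ TSpline.TJData T J Q i k ∧
      (closure (TSpline.toSet J) ∩ segment ℝ x y).Nonempty ∧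
      x k ≠ y k ∧
      (Q k ∩ Set.uIcc (x k) (y k)).Nonempty ∧
      J i = {x i} := by
  obtain ⟨z, hz, m, k, c, Q, P, hcross, hxyk, hQk⟩ :=
    TSpline.exists_isCrossing hx hy hxyi hxs hys
  obtain ⟨J, hJ, hJdata, hzJ, hJi⟩ := hcross.exists_tjunction
  have hzi : z i = x i := by simpa [hxyi] using TSpline.apply_mem_uIcc_of_mem_segment hz i
  exact ⟨J, Q, k, hJ, hJdata, ⟨z, hzJ, hz⟩, hxyk, hQk, hzi ▸ hJi⟩
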